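/- arXiv:1501.01848 — 3 statements merged into one kernel-verified Lean document; each statement's English description precedes it below -/
import Mathlib

section
/- Let N ≥ 1 and k ≥ 1 be integers, set n = N(N+1)/2, and let q > 0 and r > 0 be real. Let L : ℝⁿ → M_N(ℝ) be a linear map such that for every x ∈ ℝⁿ, L(x) is a symmetric matrix and Tr(L(x)²) = ‖x‖². Then ∫_{ℝⁿ} Tr((L(x))^k)·(r/‖x‖)^k·exp(−q‖x‖²/4) dx = (q r²/4)^{k/2} · Γ(n/2)/Γ((k+n)/2) · ∫_{ℝⁿ} Tr((L(x))^k)·exp(−q‖x‖²/4) dx, where the integrand on the left is interpreted as 0 at x = 0. (This is the relation m_k(SOE) = (q r²/4)^{k/2}·Γ(n/2)/Γ((k+n)/2)·m_k(GOE) between the k-th spectral moments of the spherical orthogonal ensemble of radius r and the Gaussian orthogonal ensemble, expressed through an isometric linear parametrization L of the real symmetric matrices by ℝⁿ; note n = dim_ℝ of the space of N×N real symmetric matrices.) -/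
open MeasureTheory Real Matrix
open scoped Classical

/-!
In polar coordinates `x = ρ u`, the integral of a positively homogeneous function against the
weight `exp (-b ‖x‖ ^ p)` is its integral over the unit sphere times a radial integral, which is
a Gamma value times a power of `b`, both depending on the function only through its degree. The
functions `x ↦ Tr (L x ^ k)` and `x ↦ Tr (L x ^ k) (r / ‖x‖) ^ k` are homogeneous of degrees `k`
and `0`, and on the unit sphere the second is `r ^ k` times the first, so the ratio of their
integrals is `r ^ k` times the ratio of the two radial integrals.
-/

/-- `f` is positively homogeneous of real degree `s`, so that it is determined by its values on the
unit sphere and at `0`. Only `t > 0` is used, hence for `s = 0` the value at `0` is arbitrary. -/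
def IsPosHomogeneous {E F : Type*} [SMul ℝ E] [SMul ℝ F] (s : ℝ) (f : E → F) : Prop :=
  ∀ ⦃t : ℝ⦄, 0 < t → ∀ x, f (t • x) = t ^ s • f x

theorem IsPosHomogeneous.div_norm_rpow_smul {E F : Type*} [NormedAddCommGroup E] [NormedSpace ℝ E]
    [DecidableEq E] [AddCommGroup F] [Module ℝ F] {s r : ℝ} {f : E → F}
    (hf : IsPosHomogeneous s f) (hr : 0 ≤ r) :
    IsPosHomogeneous 0 fun x ↦ if x = 0 then 0 else (r / ‖x‖) ^ s • f x := fun t ht x ↦ by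
  by_cases hx : x = 0
  · simp [hx]
  · have scale_cancel : r / (t * ‖x‖) * t = r / ‖x‖ := by field_simp
    simp only [smul_eq_zero, ht.ne', hx, or_self, if_false, Real.rpow_zero, one_smul]
    rw [hf ht, norm_smul, Real.norm_of_nonneg ht.le, smul_smul,
      ← Real.mul_rpow (by positivity) ht.le, scale_cancel]

theorem integral_volumeIoiPow {F : Type*} [NormedAddCommGroup F] [NormedSpace ℝ F]
    (m : ℕ) (f : ℝ → F) :
    ∫ y : Set.Ioi (0 : ℝ), f y ∂.volumeIoiPow m = ∫ y in Set.Ioi (0 : ℝ), y ^ m • f y := by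
  have density_measurable : Measurable fun y : Set.Ioi (0 : ℝ) ↦ (y.1 ^ m).toNNReal :=
    (measurable_subtype_coe.pow_const _).real_toNNReal
  simp only [Measure.volumeIoiPow, ENNReal.ofReal]
  rw [integral_withDensity_eq_integral_smul density_measurable,
    integral_subtype_comap measurableSet_Ioi fun y ↦ (y ^ m).toNNReal • f y]
  refine setIntegral_congr_fun measurableSet_Ioi fun y (hy : 0 < y) ↦ ?_
  simp only [NNReal.smul_def, Real.coe_toNNReal _ (pow_nonneg hy.le m)]

theorem mul_sq_rpow_half {a r : ℝ} (ha : 0 ≤ a) (hr : 0 ≤ r) (s : ℝ) :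
    (a * r ^ 2) ^ (s / 2) = a ^ (s / 2) * r ^ s := by
  rw [Real.mul_rpow ha (sq_nonneg r), ← Real.rpow_natCast_mul hr, Nat.cast_ofNat,
    mul_div_cancel₀ _ two_ne_zero]

section Polar

variable {E F : Type*} [NormedAddCommGroup E] [NormedSpace ℝ E] [Nontrivial E]
  [FiniteDimensional ℝ E] [MeasurableSpace E] [BorelSpace E]
  [NormedAddCommGroup F] [NormedSpace ℝ F] (μ : Measure E) [μ.IsAddHaarMeasure]

theorem integral_eq_integral_toSphere_prod_volumeIoiPow (f : E → F) :
    ∫ x, f x ∂μ = ∫ p : Metric.sphere (0 : E) 1 × Set.Ioi (0 : ℝ), f (p.2.1 • p.1.1)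
      ∂μ.toSphere.prod (.volumeIoiPow (Module.finrank ℝ E - 1)) := by
  rw [← μ.measurePreserving_homeomorphUnitSphereProd.integral_comp
      (Homeomorph.measurableEmbedding _)]
  simp only [← homeomorphUnitSphereProd_symm_apply_coe, Homeomorph.symm_apply_apply]
  rw [integral_subtype_comap (measurableSet_singleton _).compl f, restrict_compl_singleton]

theorem IsPosHomogeneous.integral_radial_smul {s : ℝ} {f : E → F} (hf : IsPosHomogeneous s f)
    (g : ℝ → ℝ) :
    ∫ x, g ‖x‖ • f x ∂μ =
      (∫ y in Set.Ioi (0 : ℝ), y ^ (Module.finrank ℝ E - 1) * (g y * y ^ s)) •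
        ∫ u : Metric.sphere (0 : E) 1, f u ∂μ.toSphere := by
  have polar_integrand (u : Metric.sphere (0 : E) 1) (y : Set.Ioi (0 : ℝ)) :
      g ‖y.1 • u.1‖ • f (y.1 • u.1) = (g y * y.1 ^ s) • f u := by
    have hy : 0 < y.1 := y.2
    rw [hf hy, norm_smul, norm_eq_of_mem_sphere, mul_one, Real.norm_of_nonneg hy.le, smul_smul]
  rw [integral_eq_integral_toSphere_prod_volumeIoiPow]
  simp only [polar_integrand]
  rw [← integral_prod_swap]
  simp only [Prod.fst_swap, Prod.snd_swap]
  rw [integral_prod_smul (fun y : Set.Ioi (0 : ℝ) ↦ g y * y.1 ^ s)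
      (fun u : Metric.sphere (0 : E) 1 ↦ f u),
    integral_volumeIoiPow _ fun y ↦ g y * y ^ s]
  simp only [smul_eq_mul]

theorem IsPosHomogeneous.integral_exp_neg_mul_norm_rpow_smul {s b p : ℝ} {f : E → F}
    (hf : IsPosHomogeneous s f) (hs : 0 < s + Module.finrank ℝ E) (hb : 0 < b) (hp : 0 < p) :
    ∫ x, Real.exp (-b * ‖x‖ ^ p) • f x ∂μ =
      (b ^ (-(s + Module.finrank ℝ E) / p) * (1 / p) * Real.Gamma ((s + Module.finrank ℝ E) / p)) •
        ∫ u : Metric.sphere (0 : E) 1, f u ∂μ.toSphere := by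
  rw [hf.integral_radial_smul μ fun y ↦ Real.exp (-b * y ^ p)]
  congr 1
  have gamma_integral := integral_rpow_mul_exp_neg_mul_rpow hp
    (by linarith : -1 < s + Module.finrank ℝ E - 1) hb
  rw [sub_add_cancel] at gamma_integral
  rw [← gamma_integral]
  refine setIntegral_congr_fun measurableSet_Ioi fun y (hy : 0 < y) ↦ ?_
  have rpow_split : y ^ (s + Module.finrank ℝ E - 1) = y ^ (Module.finrank ℝ E - 1) * y ^ s := by
    rw [← Real.rpow_natCast, Nat.cast_pred Module.finrank_pos, ← Real.rpow_add hy]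
    ring_nf
  simp only [rpow_split]
  ring

theorem IsPosHomogeneous.integral_exp_smul_eq_of_eq_smul_on_sphere {s t b p c : ℝ} {f g : E → F}
    (hf : IsPosHomogeneous s f) (hg : IsPosHomogeneous t g)
    (hs : 0 < s + Module.finrank ℝ E) (ht : 0 < t + Module.finrank ℝ E) (hb : 0 < b) (hp : 0 < p)
    (hgf : ∀ u, ‖u‖ = 1 → g u = c • f u) :
    ∫ x, Real.exp (-b * ‖x‖ ^ p) • g x ∂μ =
      (b ^ ((s - t) / p) * c *
        (Real.Gamma ((t + Module.finrank ℝ E) / p) / Real.Gamma ((s + Module.finrank ℝ E) / p))) •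
        ∫ x, Real.exp (-b * ‖x‖ ^ p) • f x ∂μ := by
  have sphere_integral : ∫ u : Metric.sphere (0 : E) 1, g u ∂μ.toSphere =
      c • ∫ u : Metric.sphere (0 : E) 1, f u ∂μ.toSphere := by
    rw [← integral_smul]
    exact integral_congr_ae (.of_forall fun u ↦ hgf u (norm_eq_of_mem_sphere u))
  have rpow_split : b ^ (-(t + Module.finrank ℝ E) / p) =
      b ^ ((s - t) / p) * b ^ (-(s + Module.finrank ℝ E) / p) := by
    rw [← Real.rpow_add hb]
    ring_nf
  have gamma_ne_zero : Real.Gamma ((s + Module.finrank ℝ E) / p) ≠ 0 :=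
    (Real.Gamma_pos_of_pos (div_pos hs hp)).ne'
  rw [hf.integral_exp_neg_mul_norm_rpow_smul μ hs hb hp,
    hg.integral_exp_neg_mul_norm_rpow_smul μ ht hb hp, sphere_integral, rpow_split, smul_smul,
    smul_smul]
  congr 1
  field_simp

end Polar

theorem isPosHomogeneous_trace_pow {E ι : Type*} [Fintype ι] [DecidableEq ι] [AddCommGroup E]
    [Module ℝ E] (L : E →ₗ[ℝ] Matrix ι ι ℝ) (k : ℕ) :
    IsPosHomogeneous k fun x ↦ trace (L x ^ k) := fun t _ x ↦ by
  simp only [map_smul, smul_pow, trace_smul, Real.rpow_natCast]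

theorem stmt_4_general {E ι : Type*} [NormedAddCommGroup E] [NormedSpace ℝ E] [Nontrivial E]
    [FiniteDimensional ℝ E] [DecidableEq E] [MeasurableSpace E] [BorelSpace E]
    [Fintype ι] [DecidableEq ι] (μ : Measure E) [μ.IsAddHaarMeasure] (L : E →ₗ[ℝ] Matrix ι ι ℝ)
    (k : ℕ) {q r : ℝ} (hq : 0 < q) (hr : 0 ≤ r) :
    ∫ x, (if x = 0 then (0 : ℝ) else trace (L x ^ k) * (r / ‖x‖) ^ k) *
        Real.exp (-q * ‖x‖ ^ 2 / 4) ∂μ =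
      (q * r ^ 2 / 4) ^ ((k : ℝ) / 2) * (Real.Gamma (Module.finrank ℝ E / 2) /
        Real.Gamma ((k + Module.finrank ℝ E) / 2)) *
        ∫ x, trace (L x ^ k) * Real.exp (-q * ‖x‖ ^ 2 / 4) ∂μ := by
  have trace_homogeneous := isPosHomogeneous_trace_pow L k
  have normalized_homogeneous : IsPosHomogeneous 0 fun x ↦
      if x = 0 then (0 : ℝ) else trace (L x ^ k) * (r / ‖x‖) ^ k := by
    simpa only [Real.rpow_natCast, smul_eq_mul, mul_comm] using
      trace_homogeneous.div_norm_rpow_smul hr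
  have finrank_pos : (0 : ℝ) < Module.finrank ℝ E := mod_cast Module.finrank_pos
  have gaussian_weight (x : E) :
      Real.exp (-q * ‖x‖ ^ 2 / 4) = Real.exp (-(q / 4) * ‖x‖ ^ (2 : ℝ)) := by
    rw [Real.rpow_two]
    ring_nf
  have sphere_ratio (u : E) (hu : ‖u‖ = 1) :
      (if u = 0 then (0 : ℝ) else trace (L u ^ k) * (r / ‖u‖) ^ k) = r ^ k • trace (L u ^ k) := by
    have u_ne_zero : u ≠ 0 := norm_ne_zero_iff.1 (hu ▸ one_ne_zero)
    rw [if_neg u_ne_zero, hu, div_one, smul_eq_mul, mul_comm]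
  have moment_ratio := trace_homogeneous.integral_exp_smul_eq_of_eq_smul_on_sphere μ
    normalized_homogeneous (by positivity) (by positivity) (by positivity : 0 < q / 4) two_pos
    sphere_ratio
  rw [sub_zero, zero_add, ← Real.rpow_natCast r, ← mul_sq_rpow_half (by positivity) hr,
    div_mul_eq_mul_div] at moment_ratio
  simpa only [gaussian_weight, smul_eq_mul, mul_comm (Real.exp _)] using moment_ratio

/-- The relation `m_k(SOE) = (qr²/4)^{k/2} Γ(n/2)/Γ((k+n)/2) m_k(GOE)`
expressed through an isometric linear parametrization `L` of the `N × N` real symmetric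
matrices by `ℝⁿ`, `n = N(N+1)/2`. -/
theorem stmt_4 (N k n : ℕ) (hN : 1 ≤ N) (hk : 1 ≤ k) (hn : n = N * (N + 1) / 2)
    (q r : ℝ) (hq : 0 < q) (hr : 0 < r)
    (L : EuclideanSpace ℝ (Fin n) →ₗ[ℝ] Matrix (Fin N) (Fin N) ℝ)
    (hsymm : ∀ x, (L x).IsSymm)
    (hiso : ∀ x : EuclideanSpace ℝ (Fin n), Matrix.trace ((L x) ^ 2) = ‖x‖ ^ 2) :
    (∫ x : EuclideanSpace ℝ (Fin n),
        (if x = 0 then (0 : ℝ) else Matrix.trace ((L x) ^ k) * (r / ‖x‖) ^ k)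
          * Real.exp (-q * ‖x‖ ^ 2 / 4))
      = (q * r ^ 2 / 4) ^ ((k : ℝ) / 2) * (Real.Gamma (n / 2) / Real.Gamma ((k + n) / 2)) *
        ∫ x : EuclideanSpace ℝ (Fin n),
          Matrix.trace ((L x) ^ k) * Real.exp (-q * ‖x‖ ^ 2 / 4) := by
  have hn_pos : 0 < n := hn ▸ Nat.div_pos (by nlinarith) two_pos
  have : NeZero n := ⟨hn_pos.ne'⟩
  simpa only [finrank_euclideanSpace_fin] using stmt_4_general volume L k hq hr.le
end

section
/- Let α > 3/2 be real and let w(t) = ∑_{ℓ=0}^∞ (Γ(α)/(Γ(α+ℓ)·ℓ!))·(−t²/4)^ℓ = ₀F₁(α; −t²/4). Then for every x ∈ ℝ with |x| > 1, (1/(2π))·∫_ℝ cos(t·x)·w(t) dt = 0. -/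
open Real MeasureTheory

open Set Filter Asymptotics ProbabilityTheory FourierTransform
open scoped Topology Nat

/-!
Up to a constant, `w` is the Fourier transform of the even weight `(1 - s²) ^ (α - 3 / 2)` on
`(-1, 1)`: expanding the cosine under the integral sign produces the even moments of the weight,
which are beta integrals. For `α > 3 / 2` the weight is continuous on `ℝ`, so Fourier inversion
recovers it from `w`, and it vanishes for `|x| > 1`.

Inversion needs `w` to be integrable. Bessel's equation for `w` becomes `v'' = (c / t² - 1) v` for
`v t = t ^ (α - 1 / 2) * w t`. As the perturbation `c / t²` is integrable at infinity, the energy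
`v² + v'²` stays bounded, so `w t = O(t ^ (1 / 2 - α))` with `1 / 2 - α < -1`.
-/

section Oscillator

/-- The factor `exp (|c| / t)` is what Gronwall's inequality gives for the perturbation `c / t²`. -/
lemma antitoneOn_energy_mul_exp {v v' : ℝ → ℝ} {c : ℝ}
    (hv : ∀ t, 0 < t → HasDerivAt v (v' t) t)
    (hv' : ∀ t, 0 < t → HasDerivAt v' ((c / t ^ 2 - 1) * v t) t) :
    AntitoneOn (fun t ↦ (v t ^ 2 + v' t ^ 2) * exp (|c| / t)) (Ioi 0) := by
  have hderiv (t : ℝ) (ht : 0 < t) :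
      HasDerivAt (fun t ↦ (v t ^ 2 + v' t ^ 2) * exp (|c| / t))
        (exp (|c| / t) / t ^ 2 * (c * (2 * v t * v' t) - |c| * (v t ^ 2 + v' t ^ 2))) t := by
    have hexp := ((hasDerivAt_inv ht.ne').const_mul |c|).exp
    simp only [← div_eq_mul_inv] at hexp
    convert! (((hv t ht).pow 2).add ((hv' t ht).pow 2)).mul hexp using 1
    simp only [Pi.add_apply, Pi.pow_apply]
    field_simp
    ring
  refine antitoneOn_of_hasDerivWithinAt_nonpos (convex_Ioi 0)
    (fun t ht ↦ (hderiv t ht).continuousAt.continuousWithinAt)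
    (fun t ht ↦ (hderiv t (interior_subset ht)).hasDerivWithinAt) fun t _ ↦ ?_
  have hcross : c * (2 * v t * v' t) ≤ |c| * (v t ^ 2 + v' t ^ 2) := by
    refine (le_abs_self _).trans ?_
    rw [abs_mul]
    gcongr
    exact abs_le.2 ⟨by nlinarith [sq_nonneg (v t + v' t)], two_mul_le_add_sq _ _⟩
  exact mul_nonpos_of_nonneg_of_nonpos (by positivity) (sub_nonpos.2 hcross)

lemma isBigO_one_of_hasDerivAt_oscillator {v v' : ℝ → ℝ} {c : ℝ}
    (hv : ∀ t, 0 < t → HasDerivAt v (v' t) t)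
    (hv' : ∀ t, 0 < t → HasDerivAt v' ((c / t ^ 2 - 1) * v t) t) :
    v =O[atTop] (1 : ℝ → ℝ) := by
  set E : ℝ → ℝ := fun t ↦ (v t ^ 2 + v' t ^ 2) * exp (|c| / t)
  refine (isBigO_one_iff ℝ).2 ⟨√(E 1), eventually_map.2 ?_⟩
  filter_upwards [eventually_ge_atTop 1] with t ht
  have ht₀ : 0 < t := one_pos.trans_le ht
  refine abs_le_sqrt ?_
  calc v t ^ 2 ≤ v t ^ 2 + v' t ^ 2 := le_add_of_nonneg_right (sq_nonneg _)
    _ ≤ E t := le_mul_of_one_le_right (by positivity) (one_le_exp (by positivity))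
    _ ≤ E 1 := antitoneOn_energy_mul_exp hv hv' (mem_Ioi.2 one_pos) ht₀ ht

/-- The substitution `v t = t ^ m * y t` removes the first-order term of the equation. -/
lemma isBigO_rpow_neg_of_hasDerivAt_bessel {y y' : ℝ → ℝ} {m : ℝ}
    (hy : ∀ t, 0 < t → HasDerivAt y (y' t) t)
    (hy' : ∀ t, 0 < t → HasDerivAt y' (-y t - 2 * m / t * y' t) t) :
    y =O[atTop] fun t ↦ t ^ (-m) := by
  have hpow (p t : ℝ) (ht : 0 < t) : HasDerivAt (fun t : ℝ ↦ t ^ p) (p * t ^ p / t) t := by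
    convert! hasDerivAt_rpow_const (Or.inl ht.ne') using 1
    rw [rpow_sub_one ht.ne', mul_div_assoc]
  have hv (t : ℝ) (ht : 0 < t) : HasDerivAt (fun t ↦ t ^ m * y t)
      (t ^ m * (m / t * y t + y' t)) t := by
    convert! (hpow m t ht).mul (hy t ht) using 1
    ring
  have hv' (t : ℝ) (ht : 0 < t) : HasDerivAt (fun t ↦ t ^ m * (m / t * y t + y' t))
      ((m * (m - 1) / t ^ 2 - 1) * (t ^ m * y t)) t := by
    have hdiv : HasDerivAt (fun t ↦ m / t) (m * -(t ^ 2)⁻¹) t := by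
      simpa only [div_eq_mul_inv] using (hasDerivAt_inv ht.ne').const_mul m
    convert! (hpow m t ht).mul ((hdiv.mul (hy t ht)).add (hy' t ht)) using 1
    simp only [Pi.add_apply, Pi.mul_apply]
    field_simp
    ring
  refine ((isBigO_one_of_hasDerivAt_oscillator hv hv').mul
    (isBigO_refl (fun t : ℝ ↦ t ^ (-m)) atTop)).congr' ?_ (by simp)
  filter_upwards [eventually_gt_atTop 0] with t ht
  rw [mul_right_comm, ← rpow_add ht, add_neg_cancel, rpow_zero, one_mul]

end Oscillator

section Hypergeometric

/-- The regularized confluent hypergeometric limit function `₀F₁(a; u) / Γ(a)`, with the junk value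
`1 / 0 = 0` playing the role of `1 / Γ` at its zeros. It is the real counterpart of
`Complex.regularizedHGFun 0 {a}`. -/
noncomputable def regularized₀F₁ (a u : ℝ) : ℝ := ∑' l : ℕ, u ^ l / (Gamma (a + l) * l !)

lemma inv_Gamma_eq_mul_inv_Gamma_add_one (a : ℝ) : (Gamma a)⁻¹ = a * (Gamma (a + 1))⁻¹ := by
  rcases eq_or_ne a 0 with rfl | ha
  · simp
  · rw [Gamma_add_one ha, mul_inv, mul_inv_cancel_left₀ ha]

lemma summable_pow_div_Gamma_mul_factorial (a u : ℝ) :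
    Summable fun l : ℕ ↦ u ^ l / (Gamma (a + l) * l !) := by
  have hradius : (‖u‖₊ : ENNReal) < (Complex.regularizedHGFunSeries 0 {(a : ℂ)}).radius := by
    rw [Complex.radius_regularizedHGFunSeries_eq_top (by simp)]
    exact ENNReal.coe_lt_top
  refine Summable.of_norm ((FormalMultilinearSeries.summable_norm_mul_pow _ hradius).congr
    fun l ↦ ?_)
  have hΓ : ‖Complex.Gamma (a + l)‖ = ‖Gamma (a + l)‖ := by
    rw [← Complex.norm_real, ← Complex.Gamma_ofReal]
    push_cast
    rfl
  simp [Complex.regularizedHGFunSeries, Complex.regularizedHGFunCoeff, hΓ,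
    div_eq_mul_inv, mul_comm]

lemma hasDerivAt_regularized₀F₁ (a u : ℝ) :
    HasDerivAt (regularized₀F₁ a) (regularized₀F₁ (a + 1) u) u := by
  set c : ℕ → ℝ := fun l ↦ (Gamma (a + l) * l !)⁻¹ with hc
  have hsucc (v : ℝ) (l : ℕ) : ((l + 1 : ℕ) : ℝ) * v ^ l * c (l + 1) =
      v ^ l / (Gamma (a + 1 + l) * l !) := by
    simp only [hc, Nat.factorial_succ]
    push_cast
    rw [show a + (l + 1) = a + 1 + (l : ℝ) by ring]
    field_simp
  have hsummable (v : ℝ) : Summable fun l : ℕ ↦ (l : ℝ) * v ^ (l - 1) * c l := by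
    refine (summable_nat_add_iff 1).1 ?_
    simpa only [add_tsub_cancel_right, hsucc] using summable_pow_div_Gamma_mul_factorial (a + 1) v
  have hball : u ∈ Metric.ball (0 : ℝ) (|u| + 1) := by simp
  have hderiv := hasDerivAt_tsum_of_isPreconnected (hsummable (|u| + 1)).norm Metric.isOpen_ball
    (convex_ball (0 : ℝ) (|u| + 1)).isPreconnected
    (fun l v _ ↦ (hasDerivAt_pow l v).mul_const (c l))
    (fun l v hv ↦ ?_) hball (summable_pow_div_Gamma_mul_factorial a u) hball
  · rw [(hsummable u).tsum_eq_zero_add] at hderiv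
    simp only [add_tsub_cancel_right, hsucc, Nat.cast_zero, zero_mul, zero_add] at hderiv
    exact hderiv
  · have hv' : ‖v‖ ≤ ‖|u| + 1‖ := by
      rw [norm_of_nonneg (by positivity : (0 : ℝ) ≤ |u| + 1)]
      exact (mem_ball_zero_iff.1 hv).le
    simp only [norm_mul, norm_pow]
    gcongr

lemma regularized₀F₁_eq_mul_add_mul (a u : ℝ) :
    regularized₀F₁ a u = a * regularized₀F₁ (a + 1) u + u * regularized₀F₁ (a + 2) u := by
  have hsum := summable_pow_div_Gamma_mul_factorial
  have hsucc (l : ℕ) : u ^ (l + 1) / (Gamma (a + (l + 1 : ℕ)) * (l + 1)!) =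
      a * (u ^ (l + 1) / (Gamma (a + 1 + (l + 1 : ℕ)) * (l + 1)!)) +
        u * (u ^ l / (Gamma (a + 2 + l) * l !)) := by
    have hΓ := inv_Gamma_eq_mul_inv_Gamma_add_one (a + (l + 1 : ℕ))
    have hl : (l ! : ℝ) ≠ 0 := by positivity
    have hl' : (l + 1 : ℝ) ≠ 0 := by positivity
    rw [show a + (l + 1 : ℕ) + 1 = a + 2 + l by push_cast; ring] at hΓ
    rw [show a + 1 + (l + 1 : ℕ) = a + 2 + l by push_cast; ring]
    simp only [div_eq_mul_inv, mul_inv, hΓ, Nat.factorial_succ]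
    push_cast
    field_simp
    ring
  have hzero : u ^ 0 / (Gamma (a + (0 : ℕ)) * 0!) =
      a * (u ^ 0 / (Gamma (a + 1 + (0 : ℕ)) * 0!)) := by
    simpa using inv_Gamma_eq_mul_inv_Gamma_add_one a
  simp only [regularized₀F₁]
  rw [(hsum a u).tsum_eq_zero_add, (hsum (a + 1) u).tsum_eq_zero_add, tsum_congr hsucc, hzero,
    Summable.tsum_add (((summable_nat_add_iff 1).2 (hsum (a + 1) u)).mul_left a)
      ((hsum (a + 2) u).mul_left u), tsum_mul_left, tsum_mul_left]
  ring

/-- The entire even function `t ↦ (t / 2) ^ (1 - a) * J_{a - 1}(t)`, where `J` denotes the Bessel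
function of the first kind. -/
noncomputable def normalizedBessel (a t : ℝ) : ℝ := regularized₀F₁ a (-t ^ 2 / 4)

lemma even_normalizedBessel (a : ℝ) : Function.Even (normalizedBessel a) := fun t ↦ by
  simp only [normalizedBessel, neg_sq]

lemma hasDerivAt_normalizedBessel (a t : ℝ) :
    HasDerivAt (normalizedBessel a) (-(t / 2) * normalizedBessel (a + 1) t) t := by
  have hsq : HasDerivAt (fun t : ℝ ↦ -t ^ 2 / 4) (-(t / 2)) t := by
    convert! ((hasDerivAt_pow 2 t).neg).div_const 4 using 1
    ring
  rw [mul_comm]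
  exact (hasDerivAt_regularized₀F₁ a _).comp t hsq

lemma continuous_normalizedBessel (a : ℝ) : Continuous (normalizedBessel a) :=
  continuous_iff_continuousAt.2 fun t ↦ (hasDerivAt_normalizedBessel a t).continuousAt

lemma hasDerivAt_deriv_normalizedBessel (a : ℝ) {t : ℝ} (ht : t ≠ 0) :
    HasDerivAt (fun t ↦ -(t / 2) * normalizedBessel (a + 1) t)
      (-normalizedBessel a t - 2 * (a - 1 / 2) / t * (-(t / 2) * normalizedBessel (a + 1) t))
      t := by
  have hhalf : HasDerivAt (fun t : ℝ ↦ -(t / 2)) (-(1 / 2)) t :=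
    ((hasDerivAt_id t).div_const 2).neg
  convert! hhalf.mul (hasDerivAt_normalizedBessel (a + 1) t) using 1
  simp only [normalizedBessel]
  rw [regularized₀F₁_eq_mul_add_mul a, show a + 1 + 1 = a + 2 by ring]
  field_simp
  ring

lemma isBigO_normalizedBessel_atTop (a : ℝ) :
    normalizedBessel a =O[atTop] fun t ↦ t ^ (1 / 2 - a) := by
  simpa only [neg_sub] using isBigO_rpow_neg_of_hasDerivAt_bessel
    (fun t _ ↦ hasDerivAt_normalizedBessel a t)
    (fun t ht ↦ hasDerivAt_deriv_normalizedBessel a ht.ne')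

lemma integrable_normalizedBessel {a : ℝ} (ha : 3 / 2 < a) : Integrable (normalizedBessel a) :=
  (continuous_normalizedBessel a).locallyIntegrable
    |>.integrable_of_isBigO_atTop_of_norm_isNegInvariant
      (ae_of_all _ fun t ↦ congrArg norm (even_normalizedBessel a t).symm)
      (isBigO_normalizedBessel_atTop a) (integrableAtFilter_rpow_atTop_iff.2 (by linarith))

end Hypergeometric

section CosTransform

/-- The cosine transform of `f` over the whole line. For even `f` it is the Fourier transform, in
the normalization with kernel `exp (-i s t)`. -/
noncomputable def cosTransform (f : ℝ → ℝ) (t : ℝ) : ℝ := ∫ s, cos (s * t) * f s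

variable {f : ℝ → ℝ}

lemma even_cosTransform (f : ℝ → ℝ) : Function.Even (cosTransform f) := fun t ↦ by
  simp only [cosTransform, mul_neg, cos_neg]

lemma cosTransform_const_mul (c : ℝ) (f : ℝ → ℝ) (t : ℝ) :
    cosTransform (fun s ↦ c * f s) t = c * cosTransform f t := by
  simp only [cosTransform, mul_left_comm _ c, integral_const_mul]

lemma cosTransform_comp_mul_left (f : ℝ → ℝ) (c t : ℝ) :
    cosTransform (fun s ↦ f (c * s)) (c * t) = |c⁻¹| * cosTransform f t := by
  simpa only [cosTransform, mul_assoc, mul_left_comm c, smul_eq_mul] using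
    Measure.integral_comp_mul_left (fun s ↦ cos (s * t) * f s) c

lemma integral_eq_zero_of_odd {G E : Type*} [AddGroup G] [MeasurableSpace G] [MeasurableNeg G]
    {μ : Measure G} [μ.IsNegInvariant] [NormedAddCommGroup E] [NormedSpace ℝ E] {g : G → E}
    (hg : Function.Odd g) : ∫ x, g x ∂μ = 0 := by
  have hneg := integral_neg_eq_self g μ
  simp only [hg _, integral_neg] at hneg
  have : IsAddTorsionFree E := .of_isTorsionFree ℝ E
  exact self_eq_neg.1 hneg.symm

lemma fourier_ofReal_eq_cosTransform (hf : Integrable f) (heven : Function.Even f) (ξ : ℝ) :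
    𝓕 (fun s ↦ (f s : ℂ)) ξ = cosTransform f (2 * π * ξ) := by
  set θ : ℝ → ℝ := fun s ↦ s * (2 * π * ξ) with hθ
  have hcos : Integrable fun s ↦ cos (θ s) * f s :=
    hf.bdd_mul (c := 1) (by fun_prop) (ae_of_all _ fun s ↦ abs_cos_le_one _)
  have hsin : Integrable fun s ↦ sin (θ s) * f s :=
    hf.bdd_mul (c := 1) (by fun_prop) (ae_of_all _ fun s ↦ abs_sin_le_one _)
  have hsin_zero : ∫ s, sin (θ s) * f s = 0 :=
    integral_eq_zero_of_odd fun s ↦ by simp only [hθ, neg_mul, sin_neg, heven s]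
  calc 𝓕 (fun s ↦ (f s : ℂ)) ξ
      = ∫ s, (((cos (θ s) * f s : ℝ) : ℂ) - ((sin (θ s) * f s : ℝ) : ℂ) * Complex.I) := by
        rw [fourier_real_eq_integral_exp_smul]
        refine integral_congr_ae (ae_of_all _ fun s ↦ ?_)
        dsimp only
        rw [show -2 * π * s * ξ = -θ s by simp only [hθ]; ring, Complex.exp_mul_I,
          ← Complex.ofReal_cos, ← Complex.ofReal_sin, cos_neg, sin_neg]
        push_cast
        rw [smul_eq_mul]
        ring
    _ = ((∫ s, cos (θ s) * f s : ℝ) : ℂ) - ((∫ s, sin (θ s) * f s : ℝ) : ℂ) * Complex.I := by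
        rw [integral_sub hcos.ofReal (hsin.ofReal.mul_const _), integral_mul_const,
          integral_complex_ofReal, integral_complex_ofReal]
    _ = cosTransform f (2 * π * ξ) := by
        rw [hsin_zero, Complex.ofReal_zero, zero_mul, sub_zero, cosTransform]

theorem cosTransform_cosTransform (hf : Integrable f) (heven : Function.Even f)
    (hcos : Integrable (cosTransform f)) {x : ℝ} (hx : ContinuousAt f x) :
    cosTransform (cosTransform f) x = 2 * π * f x := by
  have hpi : 2 * π ≠ 0 := by positivity
  have hscaled : Integrable fun ξ ↦ cosTransform f (2 * π * ξ) := hcos.comp_mul_left' hpi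
  have hscaled_even : Function.Even fun ξ ↦ cosTransform f (2 * π * ξ) := fun ξ ↦ by
    simp only [mul_neg, even_cosTransform f _]
  have hfourier : 𝓕 (fun s ↦ (f s : ℂ)) = fun ξ ↦ (cosTransform f (2 * π * ξ) : ℂ) :=
    funext (fourier_ofReal_eq_cosTransform hf heven)
  have hinv : 𝓕⁻ (𝓕 fun s ↦ (f s : ℂ)) x = f x :=
    hf.ofReal.fourierInv_fourier_eq (hfourier ▸ hscaled.ofReal)
      (Complex.continuous_ofReal.continuousAt.comp hx)
  rw [hfourier, fourierInv_eq_fourier_neg, fourier_ofReal_eq_cosTransform hscaled hscaled_even,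
    Complex.ofReal_inj, cosTransform_comp_mul_left, even_cosTransform _ x,
    abs_of_pos (by positivity), inv_mul_eq_iff_eq_mul₀ hpi] at hinv
  exact hinv

lemma hasSum_cosTransform (hf : Integrable f) {R : ℝ} (hsupp : ∀ s, R < |s| → f s = 0) (t : ℝ) :
    HasSum (fun l : ℕ ↦ (-1) ^ l * t ^ (2 * l) / (2 * l)! * ∫ s, s ^ (2 * l) * f s)
      (cosTransform f t) := by
  have hterm (l : ℕ) : (-1) ^ l * t ^ (2 * l) / (2 * l)! * ∫ s, s ^ (2 * l) * f s =
      ∫ s, (-1) ^ l * (s * t) ^ (2 * l) / (2 * l)! * f s := by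
    rw [← integral_const_mul]
    refine integral_congr_ae (ae_of_all _ fun s ↦ ?_)
    ring
  have hbound (s : ℝ) (l : ℕ) : ‖(-1) ^ l * (s * t) ^ (2 * l) / (2 * l)! * f s‖ ≤
      (R * t) ^ (2 * l) / (2 * l)! * |f s| := by
    rcases lt_or_ge R |s| with hs | hs
    · simp [hsupp s hs]
    · have hpow : (s * t) ^ (2 * l) ≤ (R * t) ^ (2 * l) := by
        rw [← (even_two_mul l).pow_abs (s * t), ← (even_two_mul l).pow_abs (R * t), abs_mul,
          abs_mul]
        exact pow_le_pow_left₀ (by positivity)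
          (mul_le_mul_of_nonneg_right (hs.trans (le_abs_self R)) (abs_nonneg t)) _
      have hnonneg : 0 ≤ (s * t) ^ (2 * l) := (even_two_mul l).pow_nonneg _
      rw [norm_mul, norm_div, norm_mul, norm_pow, norm_neg, norm_one, one_pow, one_mul,
        norm_of_nonneg hnonneg, RCLike.norm_natCast, norm_eq_abs]
      gcongr
  have hsum (s : ℝ) := (hasSum_cosh (R * t)).mul_right |f s|
  simp only [hterm]
  refine hasSum_integral_of_dominated_convergence
    (fun l s ↦ (R * t) ^ (2 * l) / (2 * l)! * |f s|)
    (fun l ↦ (Continuous.aestronglyMeasurable (by fun_prop)).mul hf.aestronglyMeasurable)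
    (fun l ↦ ae_of_all _ fun s ↦ hbound s l) (ae_of_all _ fun s ↦ (hsum s).summable) ?_
    (ae_of_all _ fun s ↦ (hasSum_cos (s * t)).mul_right (f s))
  simp only [(hsum _).tsum_eq]
  exact hf.abs.const_mul _

end CosTransform

section SymmBetaWeight

/-- The symmetric beta weight `(1 - s²) ^ (b - 1)` on `(-1, 1)`, extended by zero. It is the weight
of the Gegenbauer polynomials of index `b - 1 / 2`. -/
noncomputable def symmBetaWeight (b s : ℝ) : ℝ := if |s| < 1 then (1 - s ^ 2) ^ (b - 1) else 0

variable {b : ℝ}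

lemma even_symmBetaWeight (b : ℝ) : Function.Even (symmBetaWeight b) := fun s ↦ by
  simp only [symmBetaWeight, abs_neg, neg_sq]

lemma symmBetaWeight_of_one_le_abs (b : ℝ) {s : ℝ} (hs : 1 ≤ |s|) : symmBetaWeight b s = 0 :=
  if_neg hs.not_gt

lemma continuous_symmBetaWeight (hb : 1 < b) : Continuous (symmBetaWeight b) := by
  have hmax : symmBetaWeight b = fun s ↦ max (1 - s ^ 2) 0 ^ (b - 1) := by
    ext s
    rcases lt_or_ge |s| 1 with hs | hs
    · have hsq : 0 ≤ 1 - s ^ 2 := sub_nonneg.2 ((sq_le_one_iff_abs_le_one s).2 hs.le)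
      rw [symmBetaWeight, if_pos hs, max_eq_left hsq]
    · have hsq : 1 - s ^ 2 ≤ 0 := sub_nonpos.2 ((one_le_sq_iff_one_le_abs s).2 hs)
      rw [symmBetaWeight_of_one_le_abs b hs, max_eq_right hsq, zero_rpow (sub_pos.2 hb).ne']
  rw [hmax]
  exact Continuous.rpow_const (by fun_prop) fun s ↦ Or.inr (sub_pos.2 hb).le

lemma integral_betaPDFReal {a b : ℝ} (ha : 0 < a) (hb : 0 < b) : ∫ u, betaPDFReal a b u = 1 := by
  have hnonneg (u : ℝ) : 0 ≤ betaPDFReal a b u := by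
    by_cases hu : 0 < u ∧ u < 1
    · exact (betaPDFReal_pos hu.1 hu.2 ha hb).le
    · exact (if_neg hu).ge
  rw [integral_eq_lintegral_of_nonneg_ae (ae_of_all _ hnonneg)
    (measurable_betaPDFReal a b).aestronglyMeasurable]
  exact congrArg ENNReal.toReal (lintegral_betaPDF_eq_one ha hb)

lemma two_mul_pow_mul_symmBetaWeight_eq_betaPDFReal (hb : 0 < b) (l : ℕ) {s : ℝ} (hs : 0 < s) :
    2 * (s ^ (2 * l) * symmBetaWeight b s) =
      2 * s ^ (2 - 1 : ℝ) * (beta (l + 1 / 2) b * betaPDFReal (l + 1 / 2) b (s ^ (2 : ℝ))) := by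
  have hbeta : beta (l + 1 / 2) b ≠ 0 := (beta_pos (by positivity) hb).ne'
  have hsq_lt : s ^ 2 < 1 ↔ |s| < 1 := sq_lt_one_iff_abs_lt_one s
  rw [rpow_two, betaPDFReal, symmBetaWeight]
  rcases lt_or_ge |s| 1 with hs₁ | hs₁
  · have hpow : s ^ (2 - 1 : ℝ) * (s ^ 2) ^ ((l : ℝ) + 1 / 2 - 1) = s ^ (2 * l) := by
      rw [← rpow_natCast s 2, ← rpow_mul hs.le, ← rpow_add hs, ← rpow_natCast]
      congr 1
      push_cast
      ring
    rw [if_pos hs₁, if_pos ⟨by positivity, hsq_lt.2 hs₁⟩, ← hpow]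
    generalize beta (l + 1 / 2) b = B at hbeta ⊢
    field_simp
  · rw [if_neg hs₁.not_gt, if_neg fun h ↦ hs₁.not_gt (hsq_lt.1 h.2)]
    ring

lemma integral_pow_mul_symmBetaWeight (hb : 0 < b) (l : ℕ) :
    ∫ s, s ^ (2 * l) * symmBetaWeight b s = beta (l + 1 / 2) b := by
  calc ∫ s, s ^ (2 * l) * symmBetaWeight b s
      = ∫ s, |s| ^ (2 * l) * symmBetaWeight b |s| := by
        simp only [symmBetaWeight, abs_abs, sq_abs, (even_two_mul l).pow_abs]
    _ = ∫ s in Ioi 0, 2 * (s ^ (2 * l) * symmBetaWeight b s) := by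
        rw [integral_comp_abs (f := fun s ↦ s ^ (2 * l) * symmBetaWeight b s), integral_const_mul]
    _ = ∫ s in Ioi 0, (2 * s ^ (2 - 1 : ℝ)) •
          (beta (l + 1 / 2) b * betaPDFReal (l + 1 / 2) b (s ^ (2 : ℝ))) :=
        setIntegral_congr_fun measurableSet_Ioi fun s hs ↦
          two_mul_pow_mul_symmBetaWeight_eq_betaPDFReal hb l hs
    _ = ∫ u in Ioi 0, beta (l + 1 / 2) b * betaPDFReal (l + 1 / 2) b u :=
        integral_comp_rpow_Ioi_of_pos
          (g := fun u ↦ beta (l + 1 / 2) b * betaPDFReal (l + 1 / 2) b u) two_pos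
    _ = ∫ u, beta (l + 1 / 2) b * betaPDFReal (l + 1 / 2) b u :=
        setIntegral_eq_integral_of_forall_compl_eq_zero fun u hu ↦ by
          rw [betaPDFReal, if_neg fun h ↦ hu h.1, mul_zero]
    _ = beta (l + 1 / 2) b := by
        rw [integral_const_mul, integral_betaPDFReal (by positivity) hb, mul_one]

lemma integrable_symmBetaWeight (hb : 0 < b) : Integrable (symmBetaWeight b) := by
  refine Integrable.of_integral_ne_zero ?_
  have hmass := integral_pow_mul_symmBetaWeight hb 0
  simp only [mul_zero, pow_zero, one_mul, Nat.cast_zero, zero_add] at hmass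
  exact hmass ▸ (beta_pos one_half_pos hb).ne'

lemma Gamma_nat_add_half_mul_factorial (l : ℕ) :
    Gamma (l + 1 / 2) * (4 ^ l * l !) = √π * (2 * l)! := by
  have hdup := Gamma_mul_Gamma_add_half (l + 1 / 2)
  rw [show (l + 1 / 2 + 1 / 2 : ℝ) = l + 1 by ring, Gamma_nat_eq_factorial,
    show (2 * (l + 1 / 2) : ℝ) = (2 * l : ℕ) + 1 by push_cast; ring, Gamma_nat_eq_factorial,
    show (1 - ((2 * l : ℕ) + 1) : ℝ) = -(2 * l : ℕ) by ring, rpow_neg zero_le_two, rpow_natCast,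
    pow_mul] at hdup
  generalize Gamma (l + 1 / 2) = G at hdup ⊢
  norm_num at hdup
  field_simp at hdup
  linarith

/-- Poisson's integral representation of the Bessel functions. -/
theorem cosTransform_symmBetaWeight (hb : 0 < b) (t : ℝ) :
    cosTransform (symmBetaWeight b) t = √π * Gamma b * normalizedBessel (b + 1 / 2) t := by
  have hseries := hasSum_cosTransform (integrable_symmBetaWeight hb)
    (fun s hs ↦ symmBetaWeight_of_one_le_abs b hs.le) t
  rw [← hseries.tsum_eq, normalizedBessel, regularized₀F₁, ← tsum_mul_left]
  refine tsum_congr fun l ↦ ?_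
  have hΓ : Gamma (l + 1 / 2) = √π * (2 * l)! / (4 ^ l * l !) :=
    eq_div_of_mul_eq (by positivity) (Gamma_nat_add_half_mul_factorial l)
  have hpow : (-t ^ 2 / 4) ^ l = (-1) ^ l * t ^ (2 * l) / 4 ^ l := by
    rw [div_pow, neg_pow, ← pow_mul]
  rw [integral_pow_mul_symmBetaWeight hb, beta, hΓ, hpow,
    show (l + 1 / 2 + b : ℝ) = b + 1 / 2 + l by ring]
  field_simp

theorem cosTransform_normalizedBessel (hb : 1 < b) (x : ℝ) :
    cosTransform (normalizedBessel (b + 1 / 2)) x = 2 * √π / Gamma b * symmBetaWeight b x := by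
  have hb₀ : 0 < b := one_pos.trans hb
  have hΓ : 0 < Gamma b := Gamma_pos_of_pos hb₀
  have hpoisson : cosTransform (symmBetaWeight b) =
      fun t ↦ √π * Gamma b * normalizedBessel (b + 1 / 2) t :=
    funext (cosTransform_symmBetaWeight hb₀)
  have hintegrable : Integrable (cosTransform (symmBetaWeight b)) :=
    hpoisson ▸ (integrable_normalizedBessel (by linarith)).const_mul _
  have hinv := cosTransform_cosTransform (integrable_symmBetaWeight hb₀) (even_symmBetaWeight b)
    hintegrable (continuous_symmBetaWeight hb).continuousAt (x := x)
  rw [hpoisson, cosTransform_const_mul] at hinv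
  rw [div_mul_eq_mul_div, eq_div_iff hΓ.ne']
  refine mul_left_cancel₀ (sqrt_pos.2 pi_pos).ne' ?_
  linear_combination hinv - 2 * symmBetaWeight b x * sq_sqrt pi_pos.le

end SymmBetaWeight

/-- For `|x| > 1`, the Fourier transform of `w(t) = ₀F₁(α; -t²/4)`
vanishes. -/
theorem stmt_10 (α : ℝ) (hα : 3 / 2 < α)
    (w : ℝ → ℝ)
    (hw : w = fun t : ℝ => ∑' ℓ : ℕ,
      Real.Gamma α / (Real.Gamma (α + ℓ) * (Nat.factorial ℓ : ℝ)) * (-t ^ 2 / 4) ^ ℓ) :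
    ∀ x : ℝ, 1 < |x| →
      (1 / (2 * Real.pi)) * ∫ t : ℝ, Real.cos (t * x) * w t = 0 := by
  intro x hx
  have hbessel : w = fun t ↦ Gamma α * normalizedBessel α t := by
    simp only [hw, normalizedBessel, regularized₀F₁, ← tsum_mul_left, div_mul_eq_mul_div,
      mul_div_assoc]
  have hinversion : cosTransform (normalizedBessel α) x =
      2 * √π / Gamma (α - 1 / 2) * symmBetaWeight (α - 1 / 2) x := by
    simpa only [sub_add_cancel] using
      cosTransform_normalizedBessel (b := α - 1 / 2) (by linarith) x
  have htransform : cosTransform w x = 0 := by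
    rw [hbessel, cosTransform_const_mul, hinversion,
      symmBetaWeight_of_one_le_abs _ hx.le, mul_zero, mul_zero]
  exact mul_eq_zero_of_right _ htransform
end

section
/- Let α > 3/2 be real and let w(t) = ∑_{ℓ=0}^∞ (Γ(α)/(Γ(α+ℓ)·ℓ!))·(−t²/4)^ℓ = ₀F₁(α; −t²/4). Then ∫_ℝ w(t) dt = 2·√π·Γ(α)/Γ(α − 1/2). -/
open Real MeasureTheory

/-!
Poisson's integral `∫₀¹ cos(tx) (1 - x²)^(a - 3/2) dx` is a multiple of `₀F₁(a; -t²/4)`, so up to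
scaling `w` is the Fourier transform of the continuous, compactly supported function
`(1 - x²)₊^(a - 3/2)`, and inversion at the origin evaluates its integral.

Inversion requires `w` to be integrable: `y = t^(a - 1/2) w` solves `y'' = (c / t² - 1) y`, an
integrable perturbation of the harmonic oscillator, so the energy `|y|² + |y'|²` stays bounded and
`w = O(t^(1/2 - a))`.
-/

open Filter Asymptotics FourierTransform

section Series

/-- The regularized confluent hypergeometric limit function `₀F₁(a; z) / Γ(a)`. The normalization
makes it entire in both variables, so that no poles of `Γ` have to be excluded. -/
noncomputable def regularizedHGFunZeroOne (a z : ℂ) : ℂ := Complex.regularizedHGFun 0 {a} z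

theorem hasSum_regularizedHGFunZeroOne (a z : ℂ) :
    HasSum (fun n : ℕ ↦ z ^ n / (n.factorial * Complex.Gamma (a + n)))
      (regularizedHGFunZeroOne a z) := by
  have hradius : (Complex.regularizedHGFunSeries 0 {a}).radius = ⊤ :=
    Complex.radius_regularizedHGFunSeries_eq_top (by simp)
  have hball := (Complex.regularizedHGFunSeries 0 {a}).hasFPowerSeriesOnBall (by simp [hradius])
  have hsum := hball.hasSum (y := z) (by simp [hradius])
  simpa [regularizedHGFunZeroOne, Complex.regularizedHGFun, Complex.regularizedHGFunSeries,
    Complex.regularizedHGFunCoeff, FormalMultilinearSeries.ofScalars_apply_eq, div_eq_mul_inv,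
    mul_comm] using hsum

theorem hasSum_mul_pow_pred_regularizedHGFunZeroOne (a z : ℂ) :
    HasSum (fun n : ℕ ↦ n * z ^ (n - 1) / (n.factorial * Complex.Gamma (a + n)))
      (regularizedHGFunZeroOne (a + 1) z) := by
  rw [← hasSum_nat_add_iff' 1]
  simp only [Finset.sum_range_one, CharP.cast_eq_zero, zero_mul, zero_div, sub_zero]
  refine (hasSum_regularizedHGFunZeroOne (a + 1) z).congr_fun fun n ↦ ?_
  have hn : (n + 1 : ℂ) ≠ 0 := mod_cast n.succ_ne_zero
  rw [Nat.factorial_succ, add_right_comm a 1]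
  push_cast
  rw [← add_assoc, mul_assoc, mul_div_mul_left _ _ hn]

theorem hasDerivAt_regularizedHGFunZeroOne (a z : ℂ) :
    HasDerivAt (regularizedHGFunZeroOne a) (regularizedHGFunZeroOne (a + 1) z) z := by
  have hsum_eq : regularizedHGFunZeroOne a =
      fun w ↦ ∑' n : ℕ, w ^ n / (n.factorial * Complex.Gamma (a + n)) :=
    funext fun w ↦ (hasSum_regularizedHGFunZeroOne a w).tsum_eq.symm
  have hbound : ∀ (n : ℕ) (w : ℂ), w ∈ Metric.ball (0 : ℂ) (‖z‖ + 1) →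
      ‖w ^ n / (n.factorial * Complex.Gamma (a + n))‖ ≤
        ‖((‖z‖ + 1 : ℝ) : ℂ) ^ n / (n.factorial * Complex.Gamma (a + n))‖ := by
    intro n w hw
    rw [norm_div, norm_div, norm_pow, norm_pow, Complex.norm_of_nonneg (by positivity)]
    gcongr
    exact (mem_ball_zero_iff.1 hw).le
  have hdiff : ∀ n : ℕ, Differentiable ℂ
      fun w : ℂ ↦ w ^ n / (n.factorial * Complex.Gamma (a + n)) := by fun_prop
  have hsummable := (hasSum_regularizedHGFunZeroOne a (‖z‖ + 1 : ℝ)).summable.norm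
  have hz : z ∈ Metric.ball (0 : ℂ) (‖z‖ + 1) := by simp
  have hderiv := Complex.hasSum_deriv_of_summable_norm hsummable
    (fun n ↦ (hdiff n).differentiableOn) Metric.isOpen_ball hbound hz
  have hdiffAt := (Complex.differentiableOn_tsum_of_summable_norm hsummable
    (fun n ↦ (hdiff n).differentiableOn) Metric.isOpen_ball hbound).differentiableAt
    (Metric.isOpen_ball.mem_nhds hz)
  simp only [deriv_div_const, deriv_pow_field] at hderiv
  rw [hsum_eq,
    ← hderiv.unique (hasSum_mul_pow_pred_regularizedHGFunZeroOne a z)]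
  exact hdiffAt.hasDerivAt

theorem regularizedHGFunZeroOne_eq_add (a z : ℂ) :
    regularizedHGFunZeroOne a z =
      a * regularizedHGFunZeroOne (a + 1) z + z * regularizedHGFunZeroOne (a + 2) z := by
  have hsum := ((hasSum_regularizedHGFunZeroOne (a + 1) z).mul_left a).add
    ((hasSum_mul_pow_pred_regularizedHGFunZeroOne (a + 1) z).mul_left z)
  rw [add_assoc a 1 1, one_add_one_eq_two] at hsum
  refine (hasSum_regularizedHGFunZeroOne a z).unique (hsum.congr_fun fun n ↦ ?_)
  have hpow : (n : ℂ) * z ^ n = n * (z * z ^ (n - 1)) := by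
    rcases n with _ | n
    · simp
    · rw [Nat.add_sub_cancel, pow_succ']
  have hGamma := Complex.one_div_Gamma_eq_self_mul_one_div_Gamma_add_one (a + n)
  rw [add_right_comm] at hGamma
  simp only [div_eq_mul_inv, mul_inv, hGamma]
  linear_combination (n.factorial : ℂ)⁻¹ * (Complex.Gamma (a + 1 + n))⁻¹ * hpow

end Series

section Decay

theorem exists_norm_le_of_norm_deriv2_add_le {E : Type*} [NormedAddCommGroup E]
    [InnerProductSpace ℝ E] {y y' y'' : ℝ → E} {h H : ℝ → ℝ} {T : ℝ}
    (hy : ∀ t ≥ T, HasDerivAt y (y' t) t) (hy' : ∀ t ≥ T, HasDerivAt y' (y'' t) t)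
    (hH : ∀ t ≥ T, HasDerivAt H (-h t) t) (hH_nonneg : ∀ t ≥ T, 0 ≤ H t)
    (h_nonneg : ∀ t ≥ T, 0 ≤ h t) (hbound : ∀ t ≥ T, ‖y'' t + y t‖ ≤ h t * ‖y t‖) :
    ∃ C, ∀ t ≥ T, ‖y t‖ ≤ C := by
  set energy : ℝ → ℝ := fun t ↦ ‖y t‖ ^ 2 + ‖y' t‖ ^ 2
  have henergy_le : ∀ t ≥ T, 2 * inner ℝ (y t) (y' t) + 2 * inner ℝ (y' t) (y'' t) ≤
      h t * energy t := fun t ht ↦ calc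
    _ = 2 * inner ℝ (y' t) (y'' t + y t) := by
      rw [inner_add_right, real_inner_comm (y' t) (y t)]; ring
    _ ≤ 2 * (‖y' t‖ * (h t * ‖y t‖)) := by
      gcongr
      exact (real_inner_le_norm _ _).trans (by gcongr; exact hbound t ht)
    _ ≤ h t * energy t := by
      linarith [mul_nonneg (h_nonneg t ht) (sq_nonneg (‖y t‖ - ‖y' t‖))]
  have hderiv : ∀ t ≥ T, HasDerivAt (fun t ↦ energy t * exp (H t))
      ((2 * inner ℝ (y t) (y' t) + 2 * inner ℝ (y' t) (y'' t) - h t * energy t) * exp (H t)) t :=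
    fun t ht ↦ ((((hy t ht).norm_sq.add (hy' t ht).norm_sq).mul (hH t ht).exp).congr_deriv
      (by simp only [energy, Pi.add_apply]; ring))
  have hanti : AntitoneOn (fun t ↦ energy t * exp (H t)) (Set.Ici T) := by
    refine antitoneOn_of_hasDerivWithinAt_nonpos (convex_Ici T)
      (fun t ht ↦ (hderiv t ht).continuousAt.continuousWithinAt)
      (fun t ht ↦ (hderiv t (interior_subset ht)).hasDerivWithinAt) fun t ht ↦ ?_
    exact mul_nonpos_of_nonpos_of_nonneg
      (sub_nonpos.2 (henergy_le t (interior_subset ht))) (exp_pos _).le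
  refine ⟨√(energy T * exp (H T)), fun t ht ↦ le_sqrt_of_sq_le ?_⟩
  calc ‖y t‖ ^ 2 ≤ energy t := le_add_of_nonneg_right (by positivity)
    _ ≤ energy t * exp (H t) :=
      le_mul_of_one_le_right (by positivity) (one_le_exp (hH_nonneg t ht))
    _ ≤ energy T * exp (H T) := hanti Set.self_mem_Ici ht ht

theorem exists_norm_cpow_mul_le_of_bessel_type {k : ℂ} {p q : ℝ → ℂ} {T : ℝ} (hT : 0 < T)
    (hp : ∀ t ≥ T, HasDerivAt p (q t) t)
    (hq : ∀ t ≥ T, HasDerivAt q (-p t - 2 * k / t * q t) t) :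
    ∃ C, ∀ t ≥ T, ‖(t : ℂ) ^ k * p t‖ ≤ C := by
  have hpow : ∀ t ≥ T, HasDerivAt (fun t : ℝ ↦ (t : ℂ) ^ k) (k / t * (t : ℂ) ^ k) t := by
    intro t ht
    have ht_slit : (t : ℂ) ∈ Complex.slitPlane := Complex.ofReal_mem_slitPlane.2 (hT.trans_le ht)
    refine ((hasDerivAt_id (t : ℂ)).cpow_const ht_slit).comp_ofReal.congr_deriv ?_
    rw [id, Complex.cpow_sub _ _ (Complex.slitPlane_ne_zero ht_slit), Complex.cpow_one]
    ring
  have hinv : ∀ t ≥ T, HasDerivAt (fun t : ℝ ↦ k / (t : ℂ)) (-(k / (t : ℂ) ^ 2)) t := by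
    intro t ht
    have ht0 : (t : ℂ) ≠ 0 := mod_cast (hT.trans_le ht).ne'
    refine ((hasDerivAt_inv ht0).const_mul k).comp_ofReal.congr_deriv ?_
    ring
  -- Multiplication by `t ^ k` removes the first-order term of `p'' + (2k / t) p' + p = 0`.
  refine exists_norm_le_of_norm_deriv2_add_le
    (y' := fun t ↦ (t : ℂ) ^ k * (k / t * p t + q t))
    (y'' := fun t ↦ (k * (k - 1) / (t : ℂ) ^ 2 - 1) * ((t : ℂ) ^ k * p t))
    (h := fun t ↦ ‖k * (k - 1)‖ / t ^ 2) (H := fun t ↦ ‖k * (k - 1)‖ / t)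
    (fun t ht ↦ ?_) (fun t ht ↦ ?_) (fun t ht ↦ ?_) (fun t ht ↦ ?_) (fun t ht ↦ ?_)
    (fun t ht ↦ le_of_eq ?_)
  all_goals have ht0 : 0 < t := hT.trans_le ht
  · exact ((hpow t ht).mul (hp t ht)).congr_deriv (by ring)
  · refine ((hpow t ht).mul (((hinv t ht).mul (hp t ht)).add (hq t ht))).congr_deriv ?_
    simp only [Pi.add_apply, Pi.mul_apply]
    ring
  · simpa [div_eq_mul_inv] using (hasDerivAt_inv ht0.ne').const_mul ‖k * (k - 1)‖
  · positivity
  · positivity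
  · rw [sub_one_mul, sub_add_cancel, norm_mul, norm_div, norm_pow, Complex.norm_of_nonneg ht0.le]

theorem hasDerivAt_regularizedHGFunZeroOne_neg_sq_div_four (a : ℂ) (t : ℝ) :
    HasDerivAt (fun t : ℝ ↦ regularizedHGFunZeroOne a (-(t : ℂ) ^ 2 / 4))
      (-(t / 2) * regularizedHGFunZeroOne (a + 1) (-(t : ℂ) ^ 2 / 4)) t := by
  have harg : HasDerivAt (fun z : ℂ ↦ -z ^ 2 / 4) (-(t / 2 : ℂ)) (t : ℂ) :=
    ((hasDerivAt_pow 2 (t : ℂ)).neg.div_const 4).congr_deriv (by ring)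
  exact ((hasDerivAt_regularizedHGFunZeroOne a _).comp (t : ℂ) harg).comp_ofReal.congr_deriv
    (mul_comm _ _)

theorem isBigO_regularizedHGFunZeroOne_neg_sq_div_four (a : ℂ) :
    (fun t : ℝ ↦ regularizedHGFunZeroOne a (-(t : ℂ) ^ 2 / 4)) =O[atTop]
      fun t ↦ t ^ (1 / 2 - a.re) := by
  have hderiv_deriv : ∀ t : ℝ, 1 ≤ t → HasDerivAt
      (fun t : ℝ ↦ -(t / 2 : ℂ) * regularizedHGFunZeroOne (a + 1) (-(t : ℂ) ^ 2 / 4))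
      (-regularizedHGFunZeroOne a (-(t : ℂ) ^ 2 / 4) - 2 * (a - 1 / 2) / t *
        (-(t / 2) * regularizedHGFunZeroOne (a + 1) (-(t : ℂ) ^ 2 / 4))) t := by
    intro t ht
    have ht0 : (t : ℂ) ≠ 0 := mod_cast (zero_lt_one.trans_le ht).ne'
    have hlin : HasDerivAt (fun t : ℝ ↦ -(t / 2 : ℂ)) (-(1 / 2)) t :=
      ((hasDerivAt_id (t : ℂ)).div_const 2).neg.comp_ofReal
    refine (hlin.mul
      (hasDerivAt_regularizedHGFunZeroOne_neg_sq_div_four (a + 1) t)).congr_deriv ?_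
    rw [regularizedHGFunZeroOne_eq_add a, add_assoc a 1 1, one_add_one_eq_two]
    field_simp
    ring
  obtain ⟨C, hC⟩ := exists_norm_cpow_mul_le_of_bessel_type one_pos
    (fun t _ ↦ hasDerivAt_regularizedHGFunZeroOne_neg_sq_div_four a t) hderiv_deriv
  refine IsBigO.of_bound C ?_
  filter_upwards [eventually_ge_atTop 1] with t ht
  have ht0 : 0 < t := zero_lt_one.trans_le ht
  have hbound := hC t ht
  rw [norm_mul, Complex.norm_cpow_eq_rpow_re_of_pos ht0] at hbound
  rw [norm_of_nonneg (by positivity), show 1 / 2 - a.re = -(a - 1 / 2).re by simp,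
    rpow_neg ht0.le, ← div_eq_mul_inv, le_div_iff₀' (by positivity)]
  exact hbound

theorem integrable_regularizedHGFunZeroOne_neg_sq_div_four {a : ℂ} (ha : 3 / 2 < a.re) :
    Integrable fun t : ℝ ↦ regularizedHGFunZeroOne a (-(t : ℂ) ^ 2 / 4) := by
  have hcont : Continuous fun t : ℝ ↦ regularizedHGFunZeroOne a (-(t : ℂ) ^ 2 / 4) :=
    continuous_iff_continuousAt.2 fun t ↦
      (hasDerivAt_regularizedHGFunZeroOne_neg_sq_div_four a t).continuousAt
  refine hcont.locallyIntegrable.integrable_of_isBigO_atTop_of_norm_isNegInvariant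
    (.of_forall fun t ↦ by simp) (isBigO_regularizedHGFunZeroOne_neg_sq_div_four a)
    ⟨_, Ioi_mem_atTop 1, integrableOn_Ioi_rpow_of_lt (by linarith) one_pos⟩

end Decay

section Poisson

theorem betaIntegral_eq_two_mul_integral_sq (u v : ℂ) :
    Complex.betaIntegral u v =
      2 * ∫ x : ℝ in 0..1, (x : ℂ) ^ (2 * u - 1) * (1 - (x : ℂ) ^ 2) ^ (v - 1) := by
  have himage : (fun x : ℝ ↦ x ^ 2) '' Set.Ioo 0 1 = Set.Ioo 0 1 := by
    ext y
    constructor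
    · rintro ⟨x, ⟨hx0, hx1⟩, rfl⟩
      exact ⟨by positivity, pow_lt_one₀ hx0.le hx1 two_ne_zero⟩
    · exact fun ⟨hy0, hy1⟩ ↦
        ⟨√y, ⟨sqrt_pos.2 hy0, (sqrt_lt' one_pos).2 (by simpa)⟩, sq_sqrt hy0.le⟩
  have hinj : Set.InjOn (fun x : ℝ ↦ x ^ 2) (Set.Ioo 0 1) := fun x hx y hy h ↦
    (pow_left_inj₀ hx.1.le hy.1.le two_ne_zero).1 h
  rw [Complex.betaIntegral, intervalIntegral.integral_of_le zero_le_one,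
    intervalIntegral.integral_of_le zero_le_one, integral_Ioc_eq_integral_Ioo,
    integral_Ioc_eq_integral_Ioo, ← himage, integral_image_eq_integral_abs_deriv_smul
      measurableSet_Ioo (fun x _ ↦ (hasDerivAt_pow 2 x).hasDerivWithinAt) hinj, himage,
    ← integral_const_mul]
  refine setIntegral_congr_fun measurableSet_Ioo fun x ⟨hx0, _⟩ ↦ ?_
  have hx : (x : ℂ) ≠ 0 := mod_cast hx0.ne'
  have hpow : (x : ℂ) ^ (2 * u - 1) = x * ((x : ℂ) ^ 2) ^ (u - 1) := by
    rw [← Complex.cpow_ofNat_mul' (by simp [Complex.arg_ofReal_of_nonneg hx0.le, pi_pos])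
        (by simp [Complex.arg_ofReal_of_nonneg hx0.le, pi_pos.le]),
      show 2 * u - 1 = 1 + 2 * (u - 1) by ring, Complex.cpow_add _ _ hx, Complex.cpow_one]
  simp only [hpow, Complex.real_smul, Complex.ofReal_pow]
  rw [abs_of_pos (by positivity)]
  push_cast
  ring

theorem integral_pow_mul_one_sub_sq_cpow {b : ℂ} (hb : -1 < b.re) (n : ℕ) :
    ∫ x : ℝ in 0..1, (x : ℂ) ^ (2 * n) * (1 - (x : ℂ) ^ 2) ^ b =
      Complex.Gamma (n + 1 / 2) * Complex.Gamma (b + 1) / Complex.Gamma (b + 3 / 2 + n) / 2 := by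
  have hn : 0 < (n + 1 / 2 : ℂ).re := by
    norm_num only [Complex.add_re, Complex.natCast_re, Complex.div_ofNat_re, Complex.one_re]
    positivity
  have hbeta := Complex.betaIntegral_eq_Gamma_mul_div (n + 1 / 2) (b + 1) hn
    (by simpa [neg_lt_iff_pos_add] using hb)
  rw [betaIntegral_eq_two_mul_integral_sq, show 2 * (n + 1 / 2 : ℂ) - 1 = (2 * n : ℕ) by
    push_cast; ring, add_sub_cancel_right] at hbeta
  simp only [Complex.cpow_natCast] at hbeta
  rw [eq_div_iff two_ne_zero, mul_comm, hbeta,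
    show (n + 1 / 2 + (b + 1) : ℂ) = b + 3 / 2 + n by ring]

theorem intervalIntegrable_one_sub_sq_cpow {b : ℂ} (hb : -1 < b.re) :
    IntervalIntegrable (fun x : ℝ ↦ (1 - (x : ℂ) ^ 2) ^ b) volume 0 1 := by
  have hmoment := integral_pow_mul_one_sub_sq_cpow hb 0
  simp only [mul_zero, pow_zero, one_mul, Nat.cast_zero, zero_add, add_zero] at hmoment
  -- The integral of a non-integrable function is zero by convention, whereas this one is a
  -- quotient of nonvanishing Gamma values.
  by_contra hnot
  rw [intervalIntegral.integral_undef hnot] at hmoment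
  have hGamma_half := Complex.Gamma_ne_zero_of_re_pos (s := 1 / 2) (by norm_num)
  have hGamma_add_one := Complex.Gamma_ne_zero_of_re_pos (s := b + 1) (by simp; linarith)
  have hGamma_add_three_halves :=
    Complex.Gamma_ne_zero_of_re_pos (s := b + 3 / 2) (by norm_num; linarith)
  have hquotient := div_ne_zero (mul_ne_zero hGamma_half hGamma_add_one) hGamma_add_three_halves
  exact div_ne_zero hquotient two_ne_zero hmoment.symm

theorem Gamma_natCast_add_half_mul_factorial (n : ℕ) :
    Complex.Gamma (n + 1 / 2) * n.factorial = (2 * n).factorial * (√π : ℂ) / 4 ^ n := by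
  have hdup := Complex.Gamma_mul_Gamma_add_half (n + 1 / 2)
  rw [add_assoc, add_halves, Complex.Gamma_nat_eq_factorial, mul_add,
    mul_one_div_cancel two_ne_zero, show (2 * n + 1 : ℂ) = (2 * n : ℕ) + 1 by push_cast; rfl,
    Complex.Gamma_nat_eq_factorial, sub_add_cancel_right, Complex.cpow_neg, Complex.cpow_natCast,
    pow_mul] at hdup
  rw [hdup, show (2 : ℂ) ^ 2 = 4 by norm_num]
  ring

theorem integral_cos_series_term_mul_one_sub_sq_cpow {b : ℂ} (hb : -1 < b.re) (s : ℂ) (n : ℕ) :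
    ∫ x : ℝ in 0..1,
        (-1) ^ n * (s * x) ^ (2 * n) / ((2 * n).factorial : ℂ) * (1 - (x : ℂ) ^ 2) ^ b =
      √π * Complex.Gamma (b + 1) / 2 *
        ((-s ^ 2 / 4) ^ n / (n.factorial * Complex.Gamma (b + 3 / 2 + n))) := by
  calc _ = (-1) ^ n * s ^ (2 * n) / (2 * n).factorial *
          ∫ x : ℝ in 0..1, (x : ℂ) ^ (2 * n) * (1 - (x : ℂ) ^ 2) ^ b := by
        rw [← intervalIntegral.integral_const_mul]
        congr with x
        ring
    _ = (-1) ^ n * s ^ (2 * n) / ((2 * n).factorial * n.factorial) *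
          (Complex.Gamma (n + 1 / 2) * n.factorial) * Complex.Gamma (b + 1) /
            Complex.Gamma (b + 3 / 2 + n) / 2 := by
        rw [integral_pow_mul_one_sub_sq_cpow hb]
        field [n.factorial_ne_zero]
    _ = _ := by
        rw [Gamma_natCast_add_half_mul_factorial, div_pow, neg_pow, pow_mul]
        field [(2 * n).factorial_ne_zero]

theorem integral_cos_mul_one_sub_sq_cpow {b : ℂ} (hb : -1 < b.re) (s : ℂ) :
    ∫ x : ℝ in 0..1, Complex.cos (s * x) * (1 - (x : ℂ) ^ 2) ^ b =
      √π * Complex.Gamma (b + 1) / 2 * regularizedHGFunZeroOne (b + 3 / 2) (-s ^ 2 / 4) := by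
  have hint := intervalIntegrable_one_sub_sq_cpow hb
  have hsummable : Summable fun n : ℕ ↦ ‖s‖ ^ (2 * n) / ((2 * n).factorial : ℝ) :=
    (summable_pow_div_factorial ‖s‖).comp_injective (mul_right_injective₀ two_ne_zero)
  have hcont : ∀ n : ℕ, Continuous fun x : ℝ ↦
      (-1) ^ n * (s * x) ^ (2 * n) / ((2 * n).factorial : ℂ) := by fun_prop
  have hbound : ∀ (n : ℕ), ∀ x ∈ Set.uIoc (0 : ℝ) 1,
      ‖(-1) ^ n * (s * x) ^ (2 * n) / ((2 * n).factorial : ℂ) * (1 - (x : ℂ) ^ 2) ^ b‖ ≤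
        ‖s‖ ^ (2 * n) / ((2 * n).factorial : ℝ) * ‖(1 - (x : ℂ) ^ 2) ^ b‖ := by
    intro n x hx
    rw [Set.uIoc_of_le zero_le_one] at hx
    have hx0 : 0 ≤ x := hx.1.le
    simp only [norm_mul, norm_div, norm_pow, norm_neg, norm_one, one_pow, one_mul,
      Complex.norm_natCast, Complex.norm_of_nonneg hx0]
    gcongr
    exact mul_le_of_le_one_right (norm_nonneg s) hx.2
  have hseries := intervalIntegral.hasSum_integral_of_dominated_convergence _
    (fun n ↦ (hcont n).aestronglyMeasurable.mul hint.def'.aestronglyMeasurable)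
    (fun n ↦ .of_forall (hbound n)) (.of_forall fun x _ ↦ hsummable.mul_right _)
    (by simpa only [tsum_mul_right] using hint.norm.const_mul _)
    (.of_forall fun x _ ↦ (Complex.hasSum_cos (s * x)).mul_right _)
  exact hseries.unique (((hasSum_regularizedHGFunZeroOne _ _).mul_left _).congr_fun
    (integral_cos_series_term_mul_one_sub_sq_cpow hb s))

end Poisson

section CosineTransform

variable {E : Type*} [NormedAddCommGroup E]

theorem integral_eq_integral_Ioi_add_comp_neg [NormedSpace ℝ E] {g : ℝ → E} (hg : Integrable g) :
    ∫ x, g x = ∫ x in Set.Ioi 0, (g x + g (-x)) := by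
  rw [integral_add hg.integrableOn hg.comp_neg.integrableOn, integral_comp_neg_Ioi, neg_zero,
    add_comm, intervalIntegral.integral_Iic_add_Ioi hg.integrableOn hg.integrableOn]

variable [NormedSpace ℂ E] {f : ℝ → E}

theorem fourier_eq_integral_cos_of_even (hf : Integrable f) (heven : f.Even) (ξ : ℝ) :
    𝓕 f ξ = (2 : ℂ) • ∫ x : ℝ in Set.Ioi 0, Complex.cos ((2 * π * ξ : ℝ) * x) • f x := by
  have hint : Integrable fun x : ℝ ↦ Complex.exp (↑(-2 * π * x * ξ) * Complex.I) • f x :=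
    hf.bdd_smul 1 (by fun_prop) (.of_forall fun x ↦ (Complex.norm_exp_ofReal_mul_I _).le)
  rw [fourier_real_eq_integral_exp_smul, integral_eq_integral_Ioi_add_comp_neg hint,
    ← integral_smul]
  congr with x
  rw [heven, ← add_smul, smul_smul, Complex.two_cos, add_comm]
  push_cast
  ring_nf

theorem integral_integral_cos_smul_of_even [CompleteSpace E] (hcont : Continuous f)
    (hf : Integrable f) (heven : f.Even)
    (hcos : Integrable fun t : ℝ ↦ ∫ x : ℝ in Set.Ioi 0, Complex.cos (t * x) • f x) :
    ∫ t : ℝ, ∫ x : ℝ in Set.Ioi 0, Complex.cos (t * x) • f x = π • f 0 := by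
  have hfourier : 𝓕 f = fun ξ ↦
      (2 : ℂ) • ∫ x : ℝ in Set.Ioi 0, Complex.cos ((2 * π * ξ : ℝ) * x) • f x :=
    funext (fourier_eq_integral_cos_of_even hf heven)
  have hinv : 𝓕⁻ (𝓕 f) 0 = f 0 := by
    have hfourier_int : Integrable (𝓕 f) := by
      rw [hfourier]
      exact (hcos.comp_mul_left' two_pi_pos.ne').smul (2 : ℂ)
    rw [hcont.fourierInv_fourier_eq hf hfourier_int]
  rw [fourierInv_eq', hfourier] at hinv
  simp only [inner_zero_right, mul_zero, Complex.ofReal_zero, zero_mul, Complex.exp_zero,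
    one_smul, integral_smul] at hinv
  rw [Measure.integral_comp_mul_left fun t : ℝ ↦ ∫ x : ℝ in Set.Ioi 0, Complex.cos (t * x) • f x,
    abs_of_pos (by positivity)] at hinv
  rw [← hinv, ← Complex.coe_smul, ← Complex.coe_smul, smul_smul, smul_smul]
  push_cast
  field_simp
  rw [one_smul]

end CosineTransform

section BochnerRiesz

/-- The Bochner–Riesz multiplier `(1 - x²)₊ ^ b` of complex order `b` on the line. -/
noncomputable def bochnerRiesz (b : ℂ) (x : ℝ) : ℂ := (max 0 (1 - x ^ 2) : ℝ) ^ b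

variable {b : ℂ}

theorem bochnerRiesz_even (b : ℂ) : (bochnerRiesz b).Even := fun x ↦ by
  rw [bochnerRiesz, neg_sq, bochnerRiesz]

theorem bochnerRiesz_zero (b : ℂ) : bochnerRiesz b 0 = 1 := by simp [bochnerRiesz]

theorem bochnerRiesz_of_abs_le_one (b : ℂ) {x : ℝ} (hx : |x| ≤ 1) :
    bochnerRiesz b x = (1 - (x : ℂ) ^ 2) ^ b := by
  rw [bochnerRiesz, max_eq_right (sub_nonneg.2 ((sq_le_one_iff_abs_le_one x).2 hx))]
  push_cast
  rfl

theorem bochnerRiesz_of_one_le_abs (hb : b ≠ 0) {x : ℝ} (hx : 1 ≤ |x|) :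
    bochnerRiesz b x = 0 := by
  rw [bochnerRiesz, max_eq_left (sub_nonpos.2 ((one_le_sq_iff_one_le_abs x).2 hx)),
    Complex.ofReal_zero, Complex.zero_cpow hb]

theorem continuous_bochnerRiesz (hb : 0 < b.re) : Continuous (bochnerRiesz b) :=
  (Complex.continuous_ofReal_cpow_const hb).comp (by fun_prop)

theorem integrable_bochnerRiesz (hb : 0 < b.re) : Integrable (bochnerRiesz b) := by
  refine (continuous_bochnerRiesz hb).integrable_of_hasCompactSupport
    (.intro (isCompact_Icc (a := -1) (b := 1)) fun x hx ↦
      bochnerRiesz_of_one_le_abs (Complex.ne_zero_of_re_pos hb) ?_)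
  rw [Set.mem_Icc, ← abs_le] at hx
  exact (not_le.1 hx).le

theorem integral_Ioi_cos_mul_bochnerRiesz (hb : -1 < b.re) (hb0 : b ≠ 0) (s : ℂ) :
    ∫ x : ℝ in Set.Ioi 0, Complex.cos (s * x) * bochnerRiesz b x =
      √π * Complex.Gamma (b + 1) / 2 * regularizedHGFunZeroOne (b + 3 / 2) (-s ^ 2 / 4) := by
  rw [← integral_cos_mul_one_sub_sq_cpow hb, intervalIntegral.integral_of_le zero_le_one,
    setIntegral_eq_of_subset_of_forall_sdiff_eq_zero measurableSet_Ioi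
      (Set.Ioc_subset_Ioi_self : Set.Ioc (0 : ℝ) 1 ⊆ _) fun x hx ↦ ?_]
  · refine setIntegral_congr_fun measurableSet_Ioc fun x hx ↦ ?_
    rw [bochnerRiesz_of_abs_le_one b (abs_le.2 ⟨by linarith [hx.1], hx.2⟩)]
  · have hx1 : 1 ≤ x := le_of_not_ge fun h ↦ hx.2 ⟨hx.1, h⟩
    rw [bochnerRiesz_of_one_le_abs hb0 (hx1.trans (le_abs_self x)), mul_zero]

end BochnerRiesz

theorem integral_regularizedHGFunZeroOne_neg_sq_div_four {a : ℂ} (ha : 3 / 2 < a.re) :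
    ∫ t : ℝ, regularizedHGFunZeroOne a (-(t : ℂ) ^ 2 / 4) =
      2 * √π / Complex.Gamma (a - 1 / 2) := by
  have hb : 0 < (a - 3 / 2).re := by norm_num; linarith
  have htransform : ∀ t : ℝ,
      ∫ x : ℝ in Set.Ioi 0, Complex.cos (t * x) • bochnerRiesz (a - 3 / 2) x =
        √π * Complex.Gamma (a - 1 / 2) / 2 * regularizedHGFunZeroOne a (-(t : ℂ) ^ 2 / 4) := by
    intro t
    simp only [smul_eq_mul]
    rw [integral_Ioi_cos_mul_bochnerRiesz (by linarith) (Complex.ne_zero_of_re_pos hb),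
      sub_add_cancel, show a - 3 / 2 + 1 = a - 1 / 2 by ring]
  have hinversion := integral_integral_cos_smul_of_even (continuous_bochnerRiesz hb)
    (integrable_bochnerRiesz hb) (bochnerRiesz_even _) <| by
      simpa only [htransform] using
        (integrable_regularizedHGFunZeroOne_neg_sq_div_four ha).const_mul _
  simp only [htransform, integral_const_mul, bochnerRiesz_zero, Complex.real_smul,
    mul_one] at hinversion
  have hGamma := Complex.Gamma_ne_zero_of_re_pos (s := a - 1 / 2) (by norm_num; linarith)
  have hsqrt : (√π : ℂ) ^ 2 = π := mod_cast sq_sqrt pi_pos.le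
  have hsqrt_ne : (√π : ℂ) ≠ 0 := mod_cast (sqrt_pos.2 pi_pos).ne'
  rw [eq_div_iff hGamma]
  refine mul_left_cancel₀ hsqrt_ne ?_
  linear_combination 2 * hinversion - 2 * hsqrt

theorem stmt_11_general {α : ℂ} (hα : 3 / 2 < α.re) (w : ℝ → ℂ)
    (hw : w = fun t : ℝ ↦ ∑' ℓ : ℕ,
      Complex.Gamma α / (Complex.Gamma (α + ℓ) * ℓ.factorial) * (-(t : ℂ) ^ 2 / 4) ^ ℓ) :
    ∫ t, w t = 2 * √π * Complex.Gamma α / Complex.Gamma (α - 1 / 2) := by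
  have hw_eq : ∀ t, w t = Complex.Gamma α * regularizedHGFunZeroOne α (-(t : ℂ) ^ 2 / 4) := by
    intro t
    rw [hw, ← ((hasSum_regularizedHGFunZeroOne α _).mul_left _).tsum_eq]
    refine tsum_congr fun ℓ ↦ ?_
    ring
  simp only [hw_eq, integral_const_mul, integral_regularizedHGFunZeroOne_neg_sq_div_four hα]
  ring

/-- The total integral of `w(t) = ₀F₁(α; -t²/4)` over `ℝ` equals
`2√π·Γ(α)/Γ(α-1/2)`. -/
theorem stmt_11 (α : ℝ) (hα : 3 / 2 < α)
    (w : ℝ → ℝ)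
    (hw : w = fun t : ℝ => ∑' ℓ : ℕ,
      Real.Gamma α / (Real.Gamma (α + ℓ) * (Nat.factorial ℓ : ℝ)) * (-t ^ 2 / 4) ^ ℓ) :
    ∫ t : ℝ, w t = 2 * Real.sqrt Real.pi * Real.Gamma α / Real.Gamma (α - 1 / 2) := by
  have hcomplex := stmt_11_general (α := α) hα (fun t ↦ w t) <| funext fun t ↦ by
    rw [hw]
    push_cast [Complex.ofReal_tsum, ← Complex.Gamma_ofReal]
    rfl
  rw [integral_complex_ofReal] at hcomplex
  apply Complex.ofReal_injective
  push_cast [← Complex.Gamma_ofReal]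
  exact hcomplex
end
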